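/- Let M be a matroid with finite ground set E, rank(M) = r ≥ 1, and let k ≥ 0 be an integer. Every k-fault-tolerant spanning set B ⊆ E contains a k-fault-tolerant spanning subset B' ⊆ B with |B'| ≤ (k+1)·r. -/

import Mathlib

open Set

/-- The rank of a set `X` in a matroid `M`: the maximum cardinality of an
independent subset of `X`. -/
noncomputable def mrank {α : Type*} (M : Matroid α) (X : Set α) : ℕ :=
  sSup {n : ℕ | ∃ I, M.Indep I ∧ I ⊆ X ∧ I.ncard = n}

/-- `B` is a `k`-fault-tolerant spanning set of `M`: `B ⊆ M.E` and removing any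
at most `k` elements from `B` leaves a set of full rank. -/
def FTSpanning {α : Type*} (M : Matroid α) (k : ℕ) (B : Set α) : Prop :=
  B ⊆ M.E ∧ ∀ F ⊆ B, F.ncard ≤ k → mrank M (B \ F) = mrank M M.E

/-- `B` is a `k`-fault-tolerant basis of `M`: a `k`-fault-tolerant spanning set of
minimum cardinality among all `k`-fault-tolerant spanning sets. -/
def FTBasis {α : Type*} (M : Matroid α) (k : ℕ) (B : Set α) : Prop :=
  FTSpanning M k B ∧ ∀ B', FTSpanning M k B' → B.ncard ≤ B'.ncard

/-- `X` is `h`-uniform in `M`: `rank(X) = h` and every subset of `X` of size `h`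
has rank `h`. -/
def HUniform {α : Type*} (M : Matroid α) (h : ℕ) (X : Set α) : Prop :=
  mrank M X = h ∧ ∀ Y ⊆ X, Y.ncard = h → mrank M Y = h

lemma mrank_eq_eRk {α : Type*} (M : Matroid α) (hE : M.E.Finite) (X : Set α) :
    (mrank M X : ℕ∞) = M.eRk X := by
  obtain ⟨J, hJ⟩ := M.exists_isBasis' X
  have hJf : J.Finite := hE.subset hJ.indep.subset_ground
  rw [hJ.eRk_eq_encard, ← hJf.cast_ncard_eq]
  congr 1
  apply IsGreatest.csSup_eq
  refine ⟨⟨J, hJ.indep, hJ.subset, rfl⟩, ?_⟩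
  rintro n ⟨I, hI, hIX, rfl⟩
  have hIf : I.Finite := hE.subset hI.subset_ground
  have := hI.encard_le_eRk_of_subset hIX
  rw [hJ.eRk_eq_encard, ← hJf.cast_ncard_eq, ← hIf.cast_ncard_eq] at this
  exact_mod_cast this

lemma ft_greedy {α : Type*} (M : Matroid α) (hE : M.E.Finite) (k : ℕ) :
    ∀ B ⊆ M.E, ∃ B' ⊆ B, B'.ncard ≤ (k + 1) * mrank M M.E ∧
      ∀ F ⊆ B', F.ncard ≤ k → B \ F ⊆ M.closure (B' \ F) := by
  have key : ∀ B ⊆ M.E, ∃ I, M.IsBasis I B ∧ I.ncard ≤ mrank M M.E := by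
    intro B hB
    obtain ⟨I, hI⟩ := M.exists_isBasis B hB
    refine ⟨I, hI, ?_⟩
    have hIf : I.Finite := hE.subset hI.indep.subset_ground
    have := hI.indep.encard_le_eRk_of_subset hI.indep.subset_ground
    rw [← mrank_eq_eRk M hE, ← hIf.cast_ncard_eq] at this
    exact_mod_cast this
  induction k with
  | zero =>
    intro B hB
    obtain ⟨I, hI, hc⟩ := key B hB
    refine ⟨I, hI.subset, by simpa using hc, ?_⟩
    intro F hF h0
    have hFf : F.Finite := hE.subset (hF.trans hI.indep.subset_ground)
    have : F = ∅ := (Set.ncard_eq_zero hFf).1 (by omega)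
    subst this
    simpa using hI.subset_closure
  | succ k ih =>
    intro B hB
    obtain ⟨I, hI, hc⟩ := key B hB
    obtain ⟨C, hCB, hCc, hC⟩ := ih (B \ I) (diff_subset.trans hB)
    have hCB' : C ⊆ B := hCB.trans diff_subset
    refine ⟨I ∪ C, union_subset hI.subset hCB', ?_, ?_⟩
    · have := Set.ncard_union_le I C
      linarith
    intro F hF hFk
    have hsub : I ∪ C ⊆ B := union_subset hI.subset hCB'
    have hFf : F.Finite := hE.subset (hF.trans (hsub.trans hB))
    by_cases hd : Disjoint I F
    · exact diff_subset.trans (hI.subset_closure.trans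
        (M.closure_subset_closure (subset_diff.2 ⟨subset_union_left, hd⟩)))
    · obtain ⟨x, hxI, hxF⟩ := Set.not_disjoint_iff.1 hd
      have hlt : (F ∩ C).ncard < F.ncard := by
        apply Set.ncard_lt_ncard _ hFf
        refine ⟨inter_subset_left, fun h => (hCB (h hxF).2).2 hxI⟩
      have h1 := hC (F ∩ C) inter_subset_right (by omega)
      intro y hy
      by_cases hyI : y ∈ I
      · exact M.subset_closure ((I ∪ C) \ F) (diff_subset.trans (hsub.trans hB))
          ⟨Or.inl hyI, hy.2⟩
      · refine M.closure_subset_closure ?_ (h1 ⟨⟨hy.1, hyI⟩, fun h => hy.2 h.1⟩)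
        rintro z ⟨hz, hz'⟩
        exact ⟨Or.inr hz, fun h => hz' ⟨h, hz⟩⟩

/-- Every `k`-fault-tolerant spanning set `B` of a matroid of rank `r ≥ 1`
with finite ground set contains a `k`-fault-tolerant spanning subset `B'` with
`|B'| ≤ (k+1)·r`. -/
theorem statement2 {α : Type*} (M : Matroid α) (hE : M.E.Finite)
    (r : ℕ) (hr : r = mrank M M.E) (hr1 : 1 ≤ r) (k : ℕ)
    (B : Set α) (hB : FTSpanning M k B) :
    ∃ B' ⊆ B, FTSpanning M k B' ∧ B'.ncard ≤ (k + 1) * r := by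
  subst hr
  obtain ⟨B', hsub, hc, h⟩ := ft_greedy M hE k B hB.1
  refine ⟨B', hsub, ⟨hsub.trans hB.1, ?_⟩, hc⟩
  intro F hF hk
  have h1 := M.eRk_mono (h F hF hk)
  rw [M.eRk_closure_eq, ← mrank_eq_eRk M hE, ← mrank_eq_eRk M hE,
    hB.2 F (hF.trans hsub) hk] at h1
  have h2 := M.eRk_mono ((diff_subset.trans (hsub.trans hB.1) : B' \ F ⊆ M.E))
  rw [← mrank_eq_eRk M hE, ← mrank_eq_eRk M hE] at h2
  exact le_antisymm (by exact_mod_cast h2) (by exact_mod_cast h1)
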